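/- Let a > 0 and b ∈ ℝ, and for n large define r_n > 0 by r_n^d = (a log n + b)/(α n). If g(r) = o(r^{-c}) as r → ∞ for some c > d, then n·r_n^d·∫_{ℝ^d \ r_n^{-1}S} g(|z|) dz → 0 as n → ∞, where r_n^{-1}S = {r_n^{-1}x : x ∈ S}. -/

import Mathlib

open MeasureTheory Filter Set

noncomputable section

namespace RCM

/-- The half-open unit cube `S = (-1/2, 1/2]^d`. -/
def cube (d : ℕ) : Set (EuclideanSpace ℝ (Fin d)) :=
  {x | ∀ i, x i ∈ Set.Ioc (-(1/2) : ℝ) (1/2)}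

theorem tail_bound_aux {d : ℕ} (g : ℝ → ℝ)
    (hg_mem : ∀ r : ℝ, 0 ≤ r → g r ∈ Set.Icc (0 : ℝ) 1)
    (hg_integrable : Integrable (fun x : EuclideanSpace ℝ (Fin d) => g ‖x‖))
    {p δ : ℝ} (hp : (d : ℝ) < p) (hδ : 0 < δ) (R0 : ℝ) (hR0 : 1 ≤ R0)
    (hg : ∀ r, R0 ≤ r → g r ≤ r ^ (-(p + δ))) :
    ∃ K : ℝ, 0 ≤ K ∧ ∀ R, R0 ≤ R → ∀ A : Set (EuclideanSpace ℝ (Fin d)),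
      (∀ z ∈ A, R ≤ ‖z‖) → ∫ z in A, g ‖z‖ ≤ K * R ^ (-δ) := by
  have hint : Integrable (fun x : EuclideanSpace ℝ (Fin d) => (1 + ‖x‖) ^ (-p)) :=
    integrable_one_add_norm (by simpa using hp)
  have hp0 : 0 < p := lt_of_le_of_lt (Nat.cast_nonneg d) hp
  have hpos : ∀ x : EuclideanSpace ℝ (Fin d), 0 ≤ (1 + ‖x‖) ^ (-p) := fun x => by positivity
  refine ⟨2 ^ p * ∫ x : EuclideanSpace ℝ (Fin d), (1 + ‖x‖) ^ (-p),
    mul_nonneg (by positivity) (integral_nonneg hpos), ?_⟩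
  intro R hR A hA
  have hT : MeasurableSet {z : EuclideanSpace ℝ (Fin d) | R ≤ ‖z‖} :=
    measurableSet_le measurable_const measurable_norm
  have hR1 : 0 < R := by linarith
  calc ∫ z in A, g ‖z‖ ≤ ∫ z in {z : EuclideanSpace ℝ (Fin d) | R ≤ ‖z‖}, g ‖z‖ := by
        apply setIntegral_mono_set hg_integrable.integrableOn
        · exact Eventually.of_forall fun z => (hg_mem _ (norm_nonneg z)).1
        · exact Eventually.of_forall fun z hz => hA z hz
    _ ≤ ∫ z in {z : EuclideanSpace ℝ (Fin d) | R ≤ ‖z‖}, (2 ^ p * R ^ (-δ)) * (1 + ‖z‖) ^ (-p) := by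
        apply setIntegral_mono_on hg_integrable.integrableOn (hint.const_mul _).integrableOn hT
        intro z hz
        have hz : R ≤ ‖z‖ := hz
        have hz0 : 0 < ‖z‖ := by linarith
        refine (hg _ (hR.trans hz)).trans ?_
        have e1 : ‖z‖ ^ (-(p + δ)) = ‖z‖ ^ (-p) * ‖z‖ ^ (-δ) := by
          rw [← Real.rpow_add hz0]; congr 1; ring
        have e2 : ‖z‖ ^ (-δ) ≤ R ^ (-δ) :=
          Real.rpow_le_rpow_of_nonpos hR1 hz (by linarith)
        have e3 : ‖z‖ ^ (-p) ≤ 2 ^ p * (1 + ‖z‖) ^ (-p) := by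
          have : (2 : ℝ) ^ p = (1 / 2 : ℝ) ^ (-p) := by
            rw [one_div, Real.inv_rpow (by norm_num), Real.rpow_neg (by norm_num), inv_inv]
          rw [this, ← Real.mul_rpow (by norm_num) (by positivity)]
          exact Real.rpow_le_rpow_of_nonpos (by positivity) (by linarith) (by linarith)
        rw [e1]
        calc _ ≤ (2 ^ p * (1 + ‖z‖) ^ (-p)) * R ^ (-δ) := by gcongr
          _ = _ := by ring
    _ ≤ ∫ z : EuclideanSpace ℝ (Fin d), (2 ^ p * R ^ (-δ)) * (1 + ‖z‖) ^ (-p) := by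
        apply setIntegral_le_integral (hint.const_mul _)
        exact Eventually.of_forall fun z => by positivity
    _ = _ := by rw [integral_const_mul]; ring

theorem norm_of_not_mem_aux {d : ℕ} {r : ℝ} (hr : 0 < r) :
    ∀ z ∈ ((fun x : EuclideanSpace ℝ (Fin d) => r⁻¹ • x) '' cube d)ᶜ, (2 * r)⁻¹ ≤ ‖z‖ := by
  intro z hz
  by_contra! h
  apply hz
  refine ⟨r • z, ?_, ?_⟩
  · intro i
    have h1 : |z i| ≤ ‖z‖ := by simpa using PiLp.norm_apply_le z i
    have h2 : |r * z i| < 1 / 2 := by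
      rw [abs_mul, abs_of_pos hr]
      calc r * |z i| < r * (2 * r)⁻¹ := by gcongr; linarith
        _ = 1 / 2 := by field_simp
    have := abs_lt.1 h2
    simp only [PiLp.smul_apply, smul_eq_mul]
    exact ⟨by linarith [this.1], by linarith [this.2]⟩
  · simp [smul_smul, hr.ne']

/-- Lemma 1: if `g(r) = o(r^{-c})` with `c > d` and `r_n^d = (a log n + b)/(α n)`, then
`n r_n^d ∫_{ℝ^d \ r_n⁻¹ S} g(|z|) dz → 0`. -/
theorem tail_integral_tendsto_zero
    {d : ℕ} (hd : 2 ≤ d) (g : ℝ → ℝ) (α : ℝ)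
    (hg_antitone : AntitoneOn g (Set.Ici 0))
    (hg_mem : ∀ r : ℝ, 0 ≤ r → g r ∈ Set.Icc (0 : ℝ) 1)
    (hg_integrable : Integrable (fun x : EuclideanSpace ℝ (Fin d) => g ‖x‖))
    (hα : α = ∫ x : EuclideanSpace ℝ (Fin d), g ‖x‖) (hα_pos : 0 < α)
    {c : ℝ} (hc : (d : ℝ) < c) (hg : g =o[atTop] fun r : ℝ => r ^ (-c))
    {a : ℝ} (ha : 0 < a) (b : ℝ) (r : ℕ → ℝ)
    (hr : ∀ᶠ n : ℕ in atTop, 0 < r n ∧ r n ^ d = (a * Real.log n + b) / (α * n)) :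
    Tendsto (fun n : ℕ =>
        (n : ℝ) * r n ^ d *
          ∫ z in ((fun x : EuclideanSpace ℝ (Fin d) => (r n)⁻¹ • x) '' cube d)ᶜ, g ‖z‖)
      atTop (nhds 0) := by
  set δ : ℝ := (c - d) / 2 with hδ
  have hδ0 : 0 < δ := by rw [hδ]; linarith
  have hd0 : (0 : ℝ) < d := by exact_mod_cast (by omega : 0 < d)
  have hdn : d ≠ 0 := by omega
  obtain ⟨R1, hR1⟩ := eventually_atTop.1 (hg.bound (zero_lt_one))
  obtain ⟨K, hK0, hK⟩ := tail_bound_aux (d := d) g hg_mem hg_integrable (p := c - δ) (δ := δ)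
    (by rw [hδ]; linarith) hδ0 (max R1 1) (le_max_right _ _) (by
      intro r hr
      have h := hR1 r ((le_max_left _ _).trans hr)
      have hr0 : 0 < r := lt_of_lt_of_le one_pos ((le_max_right _ _).trans hr)
      rw [Real.norm_of_nonneg (by positivity : 0 ≤ r ^ (-c)), one_mul] at h
      simpa using (Real.le_norm_self _).trans h)
  set q : ℝ := δ / d with hq
  have hq0 : 0 < q := by positivity
  set ε : ℝ := q / (2 * (1 + q)) with hε
  have hε0 : 0 < ε := by positivity
  have hεq : ε + (ε - 1) * q = -(q / 2) := by rw [hε]; field_simp; ring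
  have hε1 : 0 < 1 - ε := by
    have : ε < 1 := by rw [hε, div_lt_one (by positivity)]; linarith
    linarith
  -- growth of the logarithm
  have hlog : ∀ᶠ n : ℕ in atTop, a * Real.log n + b ≤ (n : ℝ) ^ ε := by
    have h1 : (fun x : ℝ => a * Real.log x + b) =o[atTop] fun x : ℝ => x ^ ε := by
      refine ((isLittleO_log_rpow_atTop hε0).const_mul_left a).add ?_
      refine Asymptotics.isLittleO_const_left.2 (Or.inr ?_)
      exact tendsto_norm_atTop_atTop.comp (tendsto_rpow_atTop hε0)
    have h2 := tendsto_natCast_atTop_atTop (R := ℝ) |>.eventually (h1.bound one_pos)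
    filter_upwards [h2] with n hn
    rw [Real.norm_of_nonneg (by positivity : 0 ≤ (n : ℝ) ^ ε), one_mul] at hn
    exact (Real.le_norm_self _).trans hn
  have hrd : ∀ᶠ n : ℕ in atTop, 0 < n ∧ 0 < r n ∧ n * r n ^ d ≤ (n : ℝ) ^ ε / α ∧
      r n ^ d ≤ (n : ℝ) ^ (ε - 1) / α := by
    filter_upwards [hr, hlog, eventually_gt_atTop 0] with n ⟨h0, h1⟩ h2 h3
    have h3' : (0 : ℝ) < n := by exact_mod_cast h3
    have h4 : n * r n ^ d ≤ (n : ℝ) ^ ε / α := by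
      rw [h1, show (n : ℝ) * ((a * Real.log n + b) / (α * n)) = (a * Real.log n + b) / α by
        field_simp]
      gcongr
    refine ⟨h3, h0, h4, ?_⟩
    rw [Real.rpow_sub_one h3'.ne', div_right_comm, le_div_iff₀ h3', mul_comm]
    exact h4
  have htend : ∀ s : ℝ, 0 < s → Tendsto (fun n : ℕ => (n : ℝ) ^ (-s)) atTop (nhds 0) :=
    fun s hs => (tendsto_rpow_neg_atTop hs).comp tendsto_natCast_atTop_atTop
  have hsmall : ∀ᶠ n : ℕ in atTop, max R1 1 ≤ (2 * r n)⁻¹ := by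
    have hM : 0 < max R1 1 := lt_of_lt_of_le one_pos (le_max_right _ _)
    have h1 := ((htend (1 - ε) hε1).div_const α)
    rw [zero_div] at h1
    have h2 := h1.eventually_lt_const (show (0 : ℝ) < ((2 * max R1 1)⁻¹) ^ d by positivity)
    filter_upwards [hrd, h2] with n ⟨_, h0, _, h4⟩ h5
    rw [neg_sub] at h5
    have h6 : r n < (2 * max R1 1)⁻¹ :=
      lt_of_pow_lt_pow_left₀ d (by positivity) (h4.trans_lt h5)
    rw [le_inv_comm₀ hM (by positivity)]
    rw [mul_inv] at h6
    linarith
  refine squeeze_zero' (g := fun n : ℕ => (K * 2 ^ δ * (α⁻¹ * (α⁻¹) ^ q)) * (n : ℝ) ^ (-(q / 2)))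
    ?_ ?_ ?_
  · filter_upwards [hrd] with n ⟨_, h0, _, _⟩
    exact mul_nonneg (by positivity) (integral_nonneg fun z => (hg_mem _ (norm_nonneg z)).1)
  · filter_upwards [hrd, hsmall] with n ⟨hn, h0, h3, h4⟩ h5
    have hn' : (0 : ℝ) < n := by exact_mod_cast hn
    have h6 := hK _ h5 _ (norm_of_not_mem_aux h0)
    have h7 : ((2 * r n)⁻¹) ^ (-δ) = 2 ^ δ * (r n ^ d) ^ q := by
      rw [Real.inv_rpow (by positivity), Real.rpow_neg (by positivity), inv_inv,
        Real.mul_rpow (by norm_num) h0.le, ← Real.rpow_natCast (r n) d, ← Real.rpow_mul h0.le, hq]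
      congr 2
      field_simp
    rw [h7] at h6
    calc _ ≤ ((n : ℝ) ^ ε / α) * (K * (2 ^ δ * ((n : ℝ) ^ (ε - 1) / α) ^ q)) := by
          refine mul_le_mul h3 (h6.trans ?_)
            (integral_nonneg fun z => (hg_mem _ (norm_nonneg z)).1) (by positivity)
          gcongr
      _ = _ := by
          rw [← hεq, Real.rpow_add hn', Real.rpow_mul hn'.le, div_eq_mul_inv _ α,
            div_eq_mul_inv _ α, Real.mul_rpow (by positivity) (by positivity)]
          ring
  · simpa using (htend (q / 2) (by positivity)).const_mul (K * 2 ^ δ * (α⁻¹ * (α⁻¹) ^ q))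

end RCM
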